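/- Let X, Y, Z be jointly Gaussian random vectors with Cov(Y) invertible. Then X → Y → Z forms a Markov chain if and only if Cov(X,Z) = Cov(X,Y)·Cov(Y)^{-1}·Cov(Y,Z). -/

import Mathlib

open MeasureTheory ProbabilityTheory Matrix Finset

variable {Ω : Type*} [MeasurableSpace Ω]

/-- The cross-covariance matrix `E[(f − E f)(g − E g)ᵀ]` of two random
vectors. -/
noncomputable def crossCov {p r : ℕ} (μ : Measure Ω) (f : Ω → Fin p → ℝ)
    (g : Ω → Fin r → ℝ) : Matrix (Fin p) (Fin r) ℝ :=
  fun i j => ∫ ω, (f ω i - ∫ ω', f ω' i ∂μ) * (g ω j - ∫ ω', g ω' j ∂μ) ∂μ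

/-- `X, Y, Z` are jointly Gaussian: every real linear combination of their
coordinates has a (possibly degenerate) Gaussian distribution. -/
def JointlyGaussian {p q r : ℕ} (μ : Measure Ω) (X : Ω → Fin p → ℝ)
    (Y : Ω → Fin q → ℝ) (Z : Ω → Fin r → ℝ) : Prop :=
  ∀ (a : Fin p → ℝ) (b : Fin q → ℝ) (c : Fin r → ℝ), ∃ (m : ℝ) (v : NNReal),
    Measure.map
      (fun ω => (∑ i, a i * X ω i) + (∑ i, b i * Y ω i) + (∑ i, c i * Z ω i)) μ
      = gaussianReal m v

section ConditionalIndependence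

variable {β γ δ : Type*} [MeasurableSpace β] [MeasurableSpace γ] [MeasurableSpace δ]

/-- Under the conditional law given `Y`, the variable `Y` is almost surely constant. -/
lemma condExpKernel_ae_eq_const [StandardBorelSpace Ω] [MeasurableEq γ]
    (μ : Measure Ω) [IsFiniteMeasure μ] {Y : Ω → γ} (hY : Measurable Y) :
    ∀ᵐ ω ∂μ.trim hY.comap_le,
      ∀ᵐ ω' ∂condExpKernel μ (MeasurableSpace.comap Y inferInstance) ω, Y ω' = Y ω := by
  have hm : @Measurable _ _ ((MeasurableSpace.comap Y inferInstance).prod inferInstance) _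
      (fun p : Ω × Ω ↦ (Y p.2, Y p.1)) :=
    @Measurable.prodMk _ ((MeasurableSpace.comap Y inferInstance).prod inferInstance) _ _ _ _ _ _
      (hY.comp (@measurable_snd _ _ (MeasurableSpace.comap Y inferInstance) _))
      ((comap_measurable Y).comp (@measurable_fst _ _ (MeasurableSpace.comap Y inferInstance) _))
  have hdiag : @Measurable _ _ _ ((MeasurableSpace.comap Y inferInstance).prod inferInstance)
      (fun ω : Ω ↦ (ω, ω)) :=
    (measurable_id.mono le_rfl hY.comap_le).prodMk measurable_id
  have hset := hm (measurableSet_diagonal (α := γ))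
  refine @Measure.ae_ae_of_ae_compProd _ _ (MeasurableSpace.comap Y inferInstance) _ _ _ _ _
    (fun p : Ω × Ω ↦ Y p.2 = Y p.1) ?_
  rw [compProd_trim_condExpKernel]
  exact (ae_map_iff (@Measurable.aemeasurable _ _ _ (_) _ _ hdiag) hset).2 (by simp)

/-- Conditional independence given `Y` means independence under almost every conditional law. -/
lemma condIndepFun_iff_ae_indepFun_condExpKernel
    {Ω : Type*} {m mΩ : MeasurableSpace Ω} [StandardBorelSpace Ω]
    [MeasurableSpace.CountablyGenerated β] [MeasurableSpace.CountablyGenerated δ]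
    (hm : m ≤ mΩ) (μ : Measure Ω) [IsFiniteMeasure μ]
    {U : Ω → β} {W : Ω → δ} (hU : Measurable U) (hW : Measurable W) :
    CondIndepFun m hm U W μ ↔ ∀ᵐ ω ∂μ.trim hm, IndepFun U W (condExpKernel μ m ω) := by
  rw [condIndepFun_iff_map_prod_eq_prod_map_map hU hW]
  refine Filter.eventually_congr (Filter.Eventually.of_forall fun ω ↦ ?_)
  rw [indepFun_iff_map_prod_eq_prod_map_map hU.aemeasurable hW.aemeasurable,
    Kernel.prod_apply, Kernel.map_apply _ (by fun_prop), Kernel.map_apply _ hU,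
    Kernel.map_apply _ hW]

/-- Conditional independence given `Y` is preserved by measurable transformations that may
depend on `Y`. -/
lemma ProbabilityTheory.CondIndepFun.comp_prodMk [StandardBorelSpace Ω] [MeasurableEq γ]
    {β' δ' : Type*} [MeasurableSpace β'] [MeasurableSpace δ']
    [MeasurableSpace.CountablyGenerated β] [MeasurableSpace.CountablyGenerated δ]
    [MeasurableSpace.CountablyGenerated β'] [MeasurableSpace.CountablyGenerated δ']
    {μ : Measure Ω} [IsFiniteMeasure μ] {U : Ω → β} {W : Ω → δ} {Y : Ω → γ}
    (hU : Measurable U) (hW : Measurable W) (hY : Measurable Y)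
    {f : γ → β → β'} {g : γ → δ → δ'} (hf : Measurable (Function.uncurry f))
    (hg : Measurable (Function.uncurry g))
    (h : CondIndepFun (MeasurableSpace.comap Y inferInstance) hY.comap_le U W μ) :
    CondIndepFun (MeasurableSpace.comap Y inferInstance) hY.comap_le
      (fun ω ↦ f (Y ω) (U ω)) (fun ω ↦ g (Y ω) (W ω)) μ := by
  rw [condIndepFun_iff_ae_indepFun_condExpKernel hY.comap_le μ hU hW] at h
  refine (condIndepFun_iff_ae_indepFun_condExpKernel hY.comap_le μ
    (hf.comp (hY.prodMk hU)) (hg.comp (hY.prodMk hW))).2 ?_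
  filter_upwards [h, condExpKernel_ae_eq_const μ hY] with ω hω hconst
  refine (hω.comp (hf.comp measurable_prodMk_left : Measurable (f (Y ω)))
    (hg.comp measurable_prodMk_left : Measurable (g (Y ω)))).congr ?_ ?_
  all_goals filter_upwards [hconst] with ω' hω'; simp [hω']

/-- If `(U, W)` is independent of `Y`, conditional independence given `Y` is plain
independence. -/
lemma ProbabilityTheory.IndepFun.condIndepFun_iff [StandardBorelSpace Ω]
    {μ : Measure Ω} [IsProbabilityMeasure μ] {U : Ω → β} {W : Ω → δ} {Y : Ω → γ}
    (hU : Measurable U) (hW : Measurable W) (hY : Measurable Y)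
    (h : IndepFun (fun ω ↦ (U ω, W ω)) Y μ) :
    CondIndepFun (MeasurableSpace.comap Y inferInstance) hY.comap_le U W μ ↔ IndepFun U W μ := by
  have key {A : Set (β × δ)} (hA : MeasurableSet A) :
      μ⟦(fun ω ↦ (U ω, W ω)) ⁻¹' A | MeasurableSpace.comap Y inferInstance⟧
        =ᵐ[μ] fun _ ↦ μ.real ((fun ω ↦ (U ω, W ω)) ⁻¹' A) := by
    have hUW : Measurable fun ω ↦ (U ω, W ω) := hU.prodMk hW
    refine (condExp_indep_eq hUW.comap_le hY.comap_le
      (stronglyMeasurable_const.indicator ⟨A, hA, rfl⟩) h).trans ?_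
    rw [integral_indicator (hUW hA)]
    simp
  rw [condIndepFun_iff_condExp_inter_preimage_eq_mul hU hW,
    indepFun_iff_measure_inter_preimage_eq_mul]
  refine forall₄_congr fun s t hs ht ↦ ?_
  have h1 := key (hs.prod ht)
  have h2 := key (hs.prod MeasurableSet.univ)
  have h3 := key (MeasurableSet.univ.prod ht)
  simp only [Set.mk_preimage_prod, Set.preimage_univ, Set.inter_univ, Set.univ_inter] at h1 h2 h3
  have hreal : μ (U ⁻¹' s ∩ W ⁻¹' t) = μ (U ⁻¹' s) * μ (W ⁻¹' t) ↔
      μ.real (U ⁻¹' s ∩ W ⁻¹' t) = μ.real (U ⁻¹' s) * μ.real (W ⁻¹' t) := by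
    rw [measureReal_def, measureReal_def, measureReal_def, ← ENNReal.toReal_mul,
      ENNReal.toReal_eq_toReal_iff' (by finiteness) (by finiteness)]
  rw [hreal]
  constructor
  · intro hae
    obtain ⟨ω, h0, h1, h2, h3⟩ := (hae.and (h1.and (h2.and h3))).exists
    exact h1.symm.trans (h0.trans (congrArg₂ (· * ·) h2 h3))
  · intro heq
    filter_upwards [h1, h2, h3] with ω h1 h2 h3
    rw [h1, h2, h3, heq]

end ConditionalIndependence

section CrossCovariance

variable {p q r : ℕ} {μ : Measure Ω} {X : Ω → Fin p → ℝ} {Y : Ω → Fin q → ℝ} {Z : Ω → Fin r → ℝ}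

lemma crossCov_apply (i : Fin p) (j : Fin r) :
    crossCov μ X Z i j = cov[fun ω ↦ X ω i, fun ω ↦ Z ω j; μ] := rfl

lemma crossCov_transpose : (crossCov μ X Z)ᵀ = crossCov μ Z X := by
  ext i j
  exact covariance_comm _ _

lemma crossCov_sub_mulVec_left [IsFiniteMeasure μ] (hX : ∀ i, MemLp (fun ω ↦ X ω i) 2 μ)
    (hY : ∀ i, MemLp (fun ω ↦ Y ω i) 2 μ) (hZ : ∀ i, MemLp (fun ω ↦ Z ω i) 2 μ)
    (A : Matrix (Fin p) (Fin q) ℝ) :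
    crossCov μ (fun ω ↦ X ω - A *ᵥ Y ω) Z = crossCov μ X Z - A * crossCov μ Y Z := by
  ext i j
  have hAY (k : Fin q) : MemLp (fun ω ↦ A i k * Y ω k) 2 μ := (hY k).const_mul _
  simp only [crossCov_apply, Matrix.sub_apply, Matrix.mul_apply, Pi.sub_apply, mulVec, dotProduct]
  rw [covariance_fun_sub_left (hX i) (memLp_finsetSum _ fun k _ ↦ hAY k) (hZ j),
    covariance_fun_sum_left hAY (hZ j)]
  simp_rw [covariance_const_mul_left]

lemma crossCov_sub_mulVec_right [IsFiniteMeasure μ] (hX : ∀ i, MemLp (fun ω ↦ X ω i) 2 μ)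
    (hY : ∀ i, MemLp (fun ω ↦ Y ω i) 2 μ) (hZ : ∀ i, MemLp (fun ω ↦ Z ω i) 2 μ)
    (B : Matrix (Fin r) (Fin q) ℝ) :
    crossCov μ X (fun ω ↦ Z ω - B *ᵥ Y ω) = crossCov μ X Z - crossCov μ X Y * Bᵀ := by
  rw [← crossCov_transpose, crossCov_sub_mulVec_left hZ hY hX, transpose_sub, transpose_mul,
    crossCov_transpose, crossCov_transpose]

lemma JointlyGaussian.hasGaussianLaw (hX : Measurable X) (hY : Measurable Y) (hZ : Measurable Z)
    (h : JointlyGaussian μ X Y Z) : HasGaussianLaw (fun ω ↦ (X ω, Y ω, Z ω)) μ := by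
  refine ⟨isGaussian_of_map_eq_gaussianReal fun L ↦ ?_⟩
  rw [Measure.map_map (by fun_prop) (by fun_prop)]
  obtain ⟨m, v, hmv⟩ := h (fun i ↦ L (Pi.single i 1, 0, 0)) (fun i ↦ L (0, Pi.single i 1, 0))
    (fun i ↦ L (0, 0, Pi.single i 1))
  refine ⟨m, v, ?_⟩
  rw [← hmv]
  congr 1
  ext ω
  have hx := (L.toLinearMap ∘ₗ LinearMap.inl ℝ (Fin p → ℝ)
    ((Fin q → ℝ) × (Fin r → ℝ))).pi_apply_eq_sum_univ (X ω)
  have hy := (L.toLinearMap ∘ₗ LinearMap.inr ℝ (Fin p → ℝ) ((Fin q → ℝ) × (Fin r → ℝ)) ∘ₗ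
    LinearMap.inl ℝ (Fin q → ℝ) (Fin r → ℝ)).pi_apply_eq_sum_univ (Y ω)
  have hz := (L.toLinearMap ∘ₗ LinearMap.inr ℝ (Fin p → ℝ) ((Fin q → ℝ) × (Fin r → ℝ)) ∘ₗ
    LinearMap.inr ℝ (Fin q → ℝ) (Fin r → ℝ)).pi_apply_eq_sum_univ (Z ω)
  have hsingle {n : ℕ} (i : Fin n) : (fun j ↦ if i = j then (1 : ℝ) else 0) = Pi.single i 1 := by
    ext j
    simp [Pi.single_apply, eq_comm]
  simp only [LinearMap.comp_apply, LinearMap.inl_apply, LinearMap.inr_apply,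
    ContinuousLinearMap.coe_coe, smul_eq_mul, hsingle, ← Prod.mk_zero_zero] at hx hy hz
  have hsplit : (X ω, Y ω, Z ω) = (X ω, 0, 0) + (0, Y ω, 0) + (0, 0, Z ω) := by simp
  simp only [Function.comp_apply]
  rw [hsplit, map_add, map_add, hx, hy, hz]
  simp only [mul_comm]

/-- Residuals of `X` and `Z` that are uncorrelated with `Y` are jointly independent of `Y`. -/
lemma indepFun_residuals (hXYZ : HasGaussianLaw (fun ω ↦ (X ω, Y ω, Z ω)) μ)
    (A : Matrix (Fin p) (Fin q) ℝ) (B : Matrix (Fin r) (Fin q) ℝ)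
    (hA : crossCov μ (fun ω ↦ X ω - A *ᵥ Y ω) Y = 0)
    (hB : crossCov μ (fun ω ↦ Z ω - B *ᵥ Y ω) Y = 0) :
    IndepFun (fun ω ↦ (X ω - A *ᵥ Y ω, Z ω - B *ᵥ Y ω)) Y μ := by
  let T : ((Fin p → ℝ) × (Fin q → ℝ) × (Fin r → ℝ)) →ₗ[ℝ] (Fin p ⊕ Fin r → ℝ) × (Fin q → ℝ) :=
    { toFun := fun v ↦ (Sum.elim (v.1 - A *ᵥ v.2.1) (v.2.2 - B *ᵥ v.2.1), v.2.1)
      map_add' := fun v w ↦ by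
        ext i
        · rcases i with i | i <;> simp [mulVec_add] <;> ring
        · simp
      map_smul' := fun c v ↦ by
        ext i
        · rcases i with i | i <;> simp [mulVec_smul] <;> ring
        · simp }
  have hT := hXYZ.map_fun (LinearMap.toContinuousLinearMap T)
  have hind := HasGaussianLaw.indepFun_of_covariance_eval
    (X := fun i ω ↦ Sum.elim (X ω - A *ᵥ Y ω) (Z ω - B *ᵥ Y ω) i) (Y := fun j ω ↦ Y ω j) hT
    (by
      rintro (i | i) j
      · exact congrFun (congrFun hA i) j
      · exact congrFun (congrFun hB i) j)
  exact hind.comp (φ := fun v ↦ (fun i ↦ v (Sum.inl i), fun i ↦ v (Sum.inr i))) (ψ := id)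
    (by fun_prop) measurable_id

/-- Jointly Gaussian vectors are independent iff their cross-covariance vanishes. -/
lemma ProbabilityTheory.HasGaussianLaw.indepFun_iff_crossCov_eq_zero
    (hXZ : HasGaussianLaw (fun ω ↦ (X ω, Z ω)) μ) :
    IndepFun X Z μ ↔ crossCov μ X Z = 0 := by
  constructor
  · intro h
    ext i j
    exact (h.comp (measurable_pi_apply i) (measurable_pi_apply j)).covariance_eq_zero
      (hXZ.fst.eval i).memLp_two (hXZ.snd.eval j).memLp_two
  · intro h
    exact HasGaussianLaw.indepFun_of_covariance_eval (X := fun i ω ↦ X ω i)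
      (Y := fun j ω ↦ Z ω j) hXZ fun i j ↦ congrFun (congrFun h i) j

end CrossCovariance

/-- For jointly Gaussian random vectors `X, Y, Z` with `Cov(Y)` invertible,
`X → Y → Z` is a Markov chain (i.e. `X` and `Z` are conditionally independent
given `Y`) iff `Cov(X,Z) = Cov(X,Y) Cov(Y)⁻¹ Cov(Y,Z)`. -/
theorem stmt13 [StandardBorelSpace Ω] {p q r : ℕ} (μ : Measure Ω)
    [IsProbabilityMeasure μ]
    (X : Ω → Fin p → ℝ) (Y : Ω → Fin q → ℝ) (Z : Ω → Fin r → ℝ)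
    (hX : Measurable X) (hY : Measurable Y) (hZ : Measurable Z)
    (hGauss : JointlyGaussian μ X Y Z)
    (hcov : IsUnit (crossCov μ Y Y)) :
    CondIndepFun (MeasurableSpace.comap Y inferInstance) (hY.comap_le) X Z μ ↔
      crossCov μ X Z = crossCov μ X Y * (crossCov μ Y Y)⁻¹ * crossCov μ Y Z := by
  have hG := hGauss.hasGaussianLaw hX hY hZ
  have hX2 (i : Fin p) : MemLp (fun ω ↦ X ω i) 2 μ := (hG.fst.eval i).memLp_two
  have hY2 (i : Fin q) : MemLp (fun ω ↦ Y ω i) 2 μ := (hG.snd.fst.eval i).memLp_two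
  have hZ2 (i : Fin r) : MemLp (fun ω ↦ Z ω i) 2 μ := (hG.snd.snd.eval i).memLp_two
  have hdet := (Matrix.isUnit_iff_isUnit_det _).1 hcov
  set A := crossCov μ X Y * (crossCov μ Y Y)⁻¹ with hA_def
  set B := crossCov μ Z Y * (crossCov μ Y Y)⁻¹ with hB_def
  have hA : crossCov μ (fun ω ↦ X ω - A *ᵥ Y ω) Y = 0 := by
    rw [crossCov_sub_mulVec_left hX2 hY2 hY2, hA_def, Matrix.nonsing_inv_mul_cancel_right _ _ hdet,
      sub_self]
  have hB : crossCov μ (fun ω ↦ Z ω - B *ᵥ Y ω) Y = 0 := by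
    rw [crossCov_sub_mulVec_left hZ2 hY2 hY2, hB_def, Matrix.nonsing_inv_mul_cancel_right _ _ hdet,
      sub_self]
  have hAY : Measurable fun y : Fin q → ℝ ↦ A *ᵥ y :=
    A.mulVecLin.continuous_of_finiteDimensional.measurable
  have hBY : Measurable fun y : Fin q → ℝ ↦ B *ᵥ y :=
    B.mulVecLin.continuous_of_finiteDimensional.measurable
  have hU : Measurable fun ω ↦ X ω - A *ᵥ Y ω := hX.sub (hAY.comp hY)
  have hW : Measurable fun ω ↦ Z ω - B *ᵥ Y ω := hZ.sub (hBY.comp hY)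
  have hUW : HasGaussianLaw (fun ω ↦ (X ω - A *ᵥ Y ω, Z ω - B *ᵥ Y ω)) μ := by
    let T : ((Fin p → ℝ) × (Fin q → ℝ) × (Fin r → ℝ)) →ₗ[ℝ] (Fin p → ℝ) × (Fin r → ℝ) :=
      (LinearMap.fst ℝ _ _ - A.mulVecLin ∘ₗ LinearMap.fst ℝ _ _ ∘ₗ LinearMap.snd ℝ _ _).prod
        (LinearMap.snd ℝ _ _ ∘ₗ LinearMap.snd ℝ _ _ -
          B.mulVecLin ∘ₗ LinearMap.fst ℝ _ _ ∘ₗ LinearMap.snd ℝ _ _)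
    exact hG.map_fun (LinearMap.toContinuousLinearMap T)
  have hshift : CondIndepFun (MeasurableSpace.comap Y inferInstance) hY.comap_le X Z μ ↔
      CondIndepFun (MeasurableSpace.comap Y inferInstance) hY.comap_le
        (fun ω ↦ X ω - A *ᵥ Y ω) (fun ω ↦ Z ω - B *ᵥ Y ω) μ := by
    constructor
    · exact fun h ↦ h.comp_prodMk hX hZ hY (f := fun y x ↦ x - A *ᵥ y) (g := fun y z ↦ z - B *ᵥ y)
        (measurable_snd.sub (hAY.comp measurable_fst))
        (measurable_snd.sub (hBY.comp measurable_fst))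
    · intro h
      simpa using h.comp_prodMk hU hW hY (f := fun y x ↦ x + A *ᵥ y) (g := fun y z ↦ z + B *ᵥ y)
        (measurable_snd.add (hAY.comp measurable_fst))
        (measurable_snd.add (hBY.comp measurable_fst))
  rw [hshift, (indepFun_residuals hG A B hA hB).condIndepFun_iff hU hW hY,
    hUW.indepFun_iff_crossCov_eq_zero,
    crossCov_sub_mulVec_right (fun i ↦ (hUW.fst.eval i).memLp_two) hY2 hZ2, hA, Matrix.zero_mul,
    sub_zero, crossCov_sub_mulVec_left hX2 hY2 hZ2, sub_eq_zero]
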